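/- Let 𝔄 = ℚ[t^{±1}]/((t² + 1)³) ⊕ ℚ[t^{±1}]/((t + 1)²). Then dim_ℚ ℋ(𝔄) = 4. -/

import Mathlib

open LaurentPolynomial TensorProduct

set_option synthInstance.maxHeartbeats 1000000
set_option maxHeartbeats 1000000
noncomputable section

abbrev LQuot (K : Type) [Field K] (p : LaurentPolynomial K) : Type :=
  LaurentPolynomial K ⧸ Ideal.span {p}

/-- The wedge `a ∧ b ∧ c` as an element of the third exterior power. -/
def wedge3 (K : Type) [Field K] (M : Type) [AddCommGroup M] [Module K M] (a b c : M) :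
    ⋀[K]^3 M :=
  ⟨ExteriorAlgebra.ιMulti K 3 ![a, b, c],
    ExteriorAlgebra.ιMulti_range K 3 (Set.mem_range_self _)⟩

/-- The holonomy subspace of the third exterior power: the `K`-span of the elements
`β₁ ∧ β₂ ∧ β₃ - tβ₁ ∧ tβ₂ ∧ tβ₃`. -/
def wedgeHol (K : Type) [Field K] (M : Type) [AddCommGroup M]
    [Module (LaurentPolynomial K) M] [Module K M]
    [IsScalarTower K (LaurentPolynomial K) M] :
    Submodule K ↥(⋀[K]^3 M) :=
  Submodule.span K { x | ∃ a b c : M,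
    x = wedge3 K M a b c -
      wedge3 K M ((T 1 : LaurentPolynomial K) • a) ((T 1 : LaurentPolynomial K) • b)
        ((T 1 : LaurentPolynomial K) • c) }

/-- `ℋ(M)`: the quotient of the third exterior power by the holonomy subspace. -/
abbrev Hcal (K : Type) [Field K] (M : Type) [AddCommGroup M]
    [Module (LaurentPolynomial K) M] [Module K M]
    [IsScalarTower K (LaurentPolynomial K) M] : Type :=
  ↥(⋀[K]^3 M) ⧸ wedgeHol K M

/-- The module `𝔄 = ℚ[t^{±1}]/((t²+1)³) ⊕ ℚ[t^{±1}]/((t+1)²)`. -/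
abbrev Amod : Type := LQuot ℚ ((T 2 + 1) ^ 3) × LQuot ℚ ((T 1 + 1) ^ 2)

/-!
`ℋ(𝔄)` is the target of the universal `t`-invariant 3-form on `𝔄 = B ⊕ C`. The generalized
eigenvalues of `t²` are `-1` on `B` and `1` on `C`, and that of `t` on `C` is `-1`; a product of
three of them that differs from `1` kills the corresponding component of an invariant form, and
only the component with two arguments in `B` and one in `C` survives.

Filling its `C`-slot gives, up to a nilpotent correction, an alternating form `h` on `B` with
`h(tx, ty) = -h(x, y)`. With `p = t² + 1` such a form satisfies
`h(px, y) + h(x, py) = h(px, py)`, so `p³ = 0` leaves only the values `h(1, p)` and `h(1, tp)`.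
As `C` is two-dimensional, `ℋ(𝔄)` is spanned by four classes.

These classes are independent. Let `xₖ` and `zₖ` be the Taylor coefficients along `t = i(1 + X)`
on `B` and along `t = -(1 + X)` on `C`. Since `i² · (-1) = 1`, the forms `x₀ ∧ x₁ ∧ z₀` and
`x₀ ∧ x₂ ∧ z₀ - x₀ ∧ x₁ ∧ z₁` are invariant, and their real and imaginary parts separate the four
classes.
-/

section GeneralizedEigenvalues

theorem sub_smul_one_apply_mem_genEigenspace {K V : Type*} [CommRing K] [AddCommGroup V]
    [Module K V] {f : Module.End K V} {μ : K} {k : ℕ} {x : V}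
    (hx : x ∈ f.genEigenspace μ (k + 1 : ℕ)) : (f - μ • 1) x ∈ f.genEigenspace μ k := by
  rw [Module.End.mem_genEigenspace_nat, LinearMap.mem_ker] at hx ⊢
  rwa [pow_succ, Module.End.mul_apply] at hx

theorem map_mem_genEigenspace_of_comm {K B C : Type*} [CommRing K] [AddCommGroup B] [Module K B]
    [AddCommGroup C] [Module K C] {f : Module.End K B} {f' : Module.End K C} {i : B →ₗ[K] C}
    (hi : f' ∘ₗ i = i ∘ₗ f) {μ : K} {k : ℕ} {x : B} (hx : x ∈ f.genEigenspace μ k) :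
    i x ∈ f'.genEigenspace μ k := by
  rw [Module.End.mem_genEigenspace_nat, LinearMap.mem_ker] at hx ⊢
  have hμ : (f' - μ • 1) ∘ₗ i = i ∘ₗ (f - μ • 1) := by
    ext y
    simpa using LinearMap.congr_fun hi y
  rw [← LinearMap.comp_apply, Module.End.commute_pow_left_of_commute hμ, LinearMap.comp_apply,
    hx, map_zero]

theorem map_eq_zero_of_mem_genEigenspace {K ι V N : Type*} [Field K] [AddCommGroup V]
    [Module K V] [AddCommGroup N] [Module K N] [Fintype ι]
    (g : MultilinearMap K (fun _ : ι => V) N)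
    (f : Module.End K V) (hg : ∀ v, g (fun i => f (v i)) = g v) {μ : ι → K}
    (hμ : ∏ i, μ i ≠ 1) (k : ι → ℕ) (v : ι → V) (hv : ∀ i, v i ∈ f.genEigenspace (μ i) (k i)) :
    g v = 0 := by
  classical
  induction hn : ∑ i, k i using Nat.strong_induction_on generalizing k v with
  | h n ih =>
  by_cases hk : ∃ i, k i = 0
  · obtain ⟨i, hi⟩ := hk
    exact g.map_coord_zero i (by simpa [hi] using hv i)
  push Not at hk
  set w : ι → V := fun i => (f - μ i • 1) (v i) with hw
  have f_eq : (fun i => f (v i)) = w + fun i => μ i • v i := by ext i; simp [hw]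
  have hwk (i : ι) : w i ∈ f.genEigenspace (μ i) (k i - 1 : ℕ) :=
    sub_smul_one_apply_mem_genEigenspace
      (by simpa only [Nat.sub_add_cancel (Nat.pos_of_ne_zero (hk i))] using hv i)
  have mixed_terms (s : Finset ι) (hs : s ≠ ∅) : g (s.piecewise w fun i => μ i • v i) = 0 := by
    obtain ⟨j, hj⟩ := Finset.nonempty_iff_ne_empty.2 hs
    refine ih (∑ i, s.piecewise (fun i => k i - 1) k i) ?_ (s.piecewise (fun i => k i - 1) k) _
      (fun i => ?_) rfl
    · rw [← hn]
      refine Finset.sum_lt_sum (fun i _ => ?_) ⟨j, Finset.mem_univ j, ?_⟩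
      · by_cases hi : i ∈ s <;> simp [hi]
      · simpa [hj] using Nat.pos_of_ne_zero (hk j)
    · by_cases hi : i ∈ s
      · simpa only [Finset.piecewise_eq_of_mem _ _ _ hi] using hwk i
      · simpa only [Finset.piecewise_eq_of_notMem _ _ _ hi] using
          Submodule.smul_mem _ (μ i) (hv i)
  have scaled : g v = (∏ i, μ i) • g v := by
    conv_lhs =>
      rw [← hg v, f_eq, g.map_add_univ,
        Finset.sum_eq_single ∅ (fun s _ => mixed_terms s) (by simp),
        Finset.piecewise_empty, g.map_smul_univ]
  have : (1 - ∏ i, μ i) • g v = 0 := by rw [sub_smul, one_smul, ← scaled, sub_self]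
  exact (smul_eq_zero.1 this).resolve_left (sub_ne_zero.2 hμ.symm)

end GeneralizedEigenvalues

theorem eq_zero_of_eq_neg_self (K : Type*) {N : Type*} [Field K] [NeZero (2 : K)]
    [AddCommGroup N] [Module K N] {n : N} (hn : n = -n) : n = 0 := by
  have : (2 : K) • n = 0 := by rw [two_smul, ← sub_neg_eq_add, ← hn, sub_self]
  exact (smul_eq_zero.1 this).resolve_left two_ne_zero

theorem neg_one_ne_one_of_two_ne_zero (K : Type*) [Field K] [NeZero (2 : K)] : (-1 : K) ≠ 1 :=
  fun h => one_ne_zero (eq_zero_of_eq_neg_self K h.symm)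

/-- The operator `t² + 1`, which measures how far `t` is from being a complex structure. -/
def complexDefect {K V : Type*} [CommRing K] [AddCommGroup V] [Module K V] (t : Module.End K V) :
    Module.End K V :=
  t ^ 2 + 1

section AntiInvariantForms

section CommRing

variable {K V N : Type*} [CommRing K] [AddCommGroup V] [Module K V]
  [AddCommGroup N] [Module K N] (t : Module.End K V)

theorem complexDefect_apply (x : V) : complexDefect t x = t (t x) + x := by
  simp [complexDefect, pow_two]

theorem complexDefect_apply_comm (x : V) : complexDefect t (t x) = t (complexDefect t x) := by
  simp [complexDefect_apply]

variable {t} {g h : V →ₗ[K] V →ₗ[K] N} {u : V}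

theorem apply_apply_of_complexDefect_right (ht : ∀ x y, g (t x) (t y) = -g x y)
    (hr : ∀ x y, g x (complexDefect t y) = 0) (x y : V) : g (t x) y = g x (t y) := by
  have h := hr (t x) y
  rw [complexDefect_apply, map_add, ht] at h
  exact (neg_add_eq_zero.1 h).symm

theorem eq_zero_of_complexDefect_eq_zero
    (hu : Submodule.span K ({u, t u} ∪ Set.range (complexDefect t)) = ⊤)
    (ht : ∀ x y, g (t x) (t y) = -g x y) (hl : ∀ x y, g (complexDefect t x) y = 0)
    (hr : ∀ x y, g x (complexDefect t y) = 0) (huu : g u u = 0) (hut : g u (t u) = 0) :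
    g = 0 := by
  refine LinearMap.ext_on hu fun x hx => LinearMap.ext_on hu fun y hy => ?_
  rcases hx with (rfl | rfl) | ⟨x, rfl⟩
  · rcases hy with (rfl | rfl) | ⟨y, rfl⟩ <;> simp [*]
  · rcases hy with (rfl | rfl) | ⟨y, rfl⟩
    · simp [apply_apply_of_complexDefect_right ht hr, hut]
    · simp [ht, huu]
    · simp [hr]
  · simp [hl]

theorem complexDefect_add_complexDefect (ht : ∀ x y, h (t x) (t y) = -h x y) (x y : V) :
    h (complexDefect t x) y + h x (complexDefect t y) =
      h (complexDefect t x) (complexDefect t y) := by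
  simp only [complexDefect_apply, map_add, LinearMap.add_apply, ht, neg_neg]
  abel

theorem complexDefect_complexDefect_sq (ht : ∀ x y, h (t x) (t y) = -h x y)
    (hp : complexDefect t ^ 3 = 0) (x y : V) :
    h (complexDefect t x) (complexDefect t (complexDefect t y)) = 0 := by
  have hp3 : complexDefect t (complexDefect t (complexDefect t y)) = 0 := by
    simpa [pow_succ] using LinearMap.congr_fun hp y
  simpa [hp3] using complexDefect_add_complexDefect ht x (complexDefect t (complexDefect t y))

end CommRing

variable {K V N : Type*} [Field K] [NeZero (2 : K)] [AddCommGroup V] [Module K V]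
  [AddCommGroup N] [Module K N] {t : Module.End K V} {g h : V →ₗ[K] V →ₗ[K] N} {u : V}

theorem eq_zero_of_isAlt_of_complexDefect_eq_zero
    (hu : Submodule.span K ({u, t u} ∪ Set.range (complexDefect t)) = ⊤) (hg : g.IsAlt)
    (ht : ∀ x y, g (t x) (t y) = -g x y) (hr : ∀ x y, g x (complexDefect t y) = 0) :
    g = 0 := by
  have hl (x y : V) : g (complexDefect t x) y = 0 := by rw [← hg.neg, hr, neg_zero]
  have hut : g u (t u) = -g u (t u) := by
    rw [hg.neg, apply_apply_of_complexDefect_right ht hr]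
  exact eq_zero_of_complexDefect_eq_zero hu ht hl hr (hg u) (eq_zero_of_eq_neg_self K hut)

theorem complexDefect_sq_left_eq_zero
    (hu : Submodule.span K ({u, t u} ∪ Set.range (complexDefect t)) = ⊤)
    (hp : complexDefect t ^ 3 = 0) (hh : h.IsAlt) (ht : ∀ x y, h (t x) (t y) = -h x y)
    (x y : V) : h (complexDefect t (complexDefect t x)) y = 0 := by
  set p := complexDefect t with hpt
  have move_left (x y : V) : h (p (p x)) y = -h (p x) (p y) := by
    have h21 : h (p (p x)) (p y) = 0 := by
      rw [← hh.neg, complexDefect_complexDefect_sq ht hp, neg_zero]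
    rw [eq_neg_iff_add_eq_zero, complexDefect_add_complexDefect ht, h21]
  suffices hg : h ∘ₗ p ∘ₗ p = 0 from LinearMap.congr_fun₂ hg x y
  refine eq_zero_of_isAlt_of_complexDefect_eq_zero hu (fun x => ?_) (fun x y => ?_) fun x y => ?_
  · simp only [LinearMap.comp_apply, move_left, hh (p x), neg_zero]
  · simp only [LinearMap.comp_apply, hpt, complexDefect_apply_comm, ht]
  · simp only [LinearMap.comp_apply, move_left, ← hpt, neg_eq_zero]
    exact complexDefect_complexDefect_sq ht hp x y

theorem eq_zero_of_isAlt_of_complexDefect_cube_eq_zero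
    (hu : Submodule.span K ({u, t u} ∪ Set.range (complexDefect t)) = ⊤)
    (hp : complexDefect t ^ 3 = 0) (hh : h.IsAlt) (ht : ∀ x y, h (t x) (t y) = -h x y)
    (hup : h u (complexDefect t u) = 0) (hutp : h u (t (complexDefect t u)) = 0) : h = 0 := by
  set p := complexDefect t with hpt
  have h20 (x y : V) : h (p (p x)) y = 0 := complexDefect_sq_left_eq_zero hu hp hh ht x y
  have h11 (x y : V) : h (p x) (p y) = 0 := by
    have := complexDefect_add_complexDefect ht (p x) y
    rwa [← hpt, h20, h20, zero_add] at this
  have hpt_anti (x y : V) : (h ∘ₗ p) (t x) (t y) = -(h ∘ₗ p) x y := by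
    simp only [LinearMap.comp_apply, hpt, complexDefect_apply_comm, ht]
  have h10 : h ∘ₗ p = 0 := by
    refine eq_zero_of_complexDefect_eq_zero hu hpt_anti h20 h11 ?_ ?_
    · rw [LinearMap.comp_apply, ← hh.neg, hup, neg_zero]
    · rw [← apply_apply_of_complexDefect_right hpt_anti h11, LinearMap.comp_apply, ← hh.neg,
        hpt, complexDefect_apply_comm, hutp, neg_zero]
  refine eq_zero_of_isAlt_of_complexDefect_eq_zero hu hh ht fun x y => ?_
  rw [← hh.neg, ← hpt, ← LinearMap.comp_apply, h10]
  simp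

end AntiInvariantForms

section ThreeForms

variable {K B C N : Type*} [AddCommGroup B] [AddCommGroup C] [AddCommGroup N]

section CommRing

variable [CommRing K] [Module K B] [Module K C] [Module K N]

/-- The bilinear form `(x, y) ↦ F (a, x, y)` obtained by filling the first slot of a 3-form. -/
def contractFirst (F : B [⋀^Fin 3]→ₗ[K] N) (a : B) : B →ₗ[K] B →ₗ[K] N :=
  LinearMap.mk₂ K (fun x y => F ![a, x, y])
    (fun x x' y => (F.curryLeft a).map_vecCons_add ![y] x x')
    (fun k x y => (F.curryLeft a).map_vecCons_smul ![y] k x)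
    (fun x y y' => ((F.curryLeft a).curryLeft x).map_vecCons_add ![] y y')
    (fun k x y => ((F.curryLeft a).curryLeft x).map_vecCons_smul ![] k y)

theorem isAlt_contractFirst (F : B [⋀^Fin 3]→ₗ[K] N) (a : B) : (contractFirst F a).IsAlt :=
  fun x => F.map_eq_zero_of_eq ![a, x, x] (i := 1) (j := 2) rfl (by decide)

variable {F : (B × C) [⋀^Fin 3]→ₗ[K] N}

theorem map_piecewise_compl_singleton_eq_zero
    (hmix : ∀ (c : C) (x y : B), F ![(0, c), (x, 0), (y, 0)] = 0) (j : Fin 3)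
    (b : Fin 3 → B) (c : Fin 3 → C) :
    F (({j}ᶜ : Finset (Fin 3)).piecewise (fun i => (b i, 0)) fun i => (0, c i)) = 0 := by
  set v : Fin 3 → B × C := ({j}ᶜ : Finset (Fin 3)).piecewise (fun i => (b i, 0)) fun i => (0, c i)
    with hv
  have hperm : v ∘ Equiv.swap 0 j =
      ![(0, c j), (b (Equiv.swap 0 j 1), 0), (b (Equiv.swap 0 j 2), 0)] := by
    ext i : 1
    fin_cases j <;> fin_cases i <;> simp [hv, Finset.piecewise, Equiv.swap_apply_def]
  have := F.map_perm v (Equiv.swap 0 j)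
  rw [hperm, hmix] at this
  exact (smul_eq_zero_iff_eq _).1 this.symm

end CommRing

variable [Field K] [NeZero (2 : K)] [Module K B] [Module K C] [Module K N]
  {F : (B × C) [⋀^Fin 3]→ₗ[K] N} {s : Module.End K B} {r : Module.End K C}

theorem map_inr_inl_inl_eq_zero (hF : F.compLinearMap (s.prodMap r) = F) {u : B}
    (hu : Submodule.span K ({u, s u} ∪ Set.range (complexDefect s)) = ⊤)
    (hs : complexDefect s ^ 3 = 0) {c : C}
    (hc : ∀ x y : B, F ![(0, r c + c), (x, 0), (y, 0)] = 0)
    (hup : F ![(0, c), (u, 0), (complexDefect s u, 0)] = 0)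
    (hutp : F ![(0, c), (u, 0), (s (complexDefect s u), 0)] = 0) (x y : B) :
    F ![(0, c), (x, 0), (y, 0)] = 0 := by
  set h := (contractFirst F (0, c)).compl₁₂ (LinearMap.inl K B C) (LinearMap.inl K B C)
  have h_anti (x y : B) : h (s x) (s y) = -h x y := by
    have split : F ![(0, r c + c), (s x, 0), (s y, 0)] =
        F ![(0, r c), (s x, 0), (s y, 0)] + F ![(0, c), (s x, 0), (s y, 0)] := by
      rw [← F.map_vecCons_add, Prod.mk_add_mk, add_zero]
    have inv : F ![(0, r c), (s x, 0), (s y, 0)] = F ![(0, c), (x, 0), (y, 0)] := by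
      conv_rhs => rw [← hF, AlternatingMap.compLinearMap_apply]
      congr 1
      ext i : 1
      fin_cases i <;> simp
    rw [hc, inv] at split
    exact (neg_eq_of_add_eq_zero_right split.symm).symm
  have h_zero : h = 0 := eq_zero_of_isAlt_of_complexDefect_cube_eq_zero hu hs
    (fun x => isAlt_contractFirst F (0, c) (x, 0)) h_anti hup hutp
  exact LinearMap.congr_fun₂ h_zero x y

theorem map_piecewise_inl_inr_eq_zero_of_odd (hF : F.compLinearMap (s.prodMap r) = F)
    (hs : complexDefect s ^ 3 = 0) (hr : (r + 1) ^ 2 = 0) {S : Finset (Fin 3)} (hS : Odd S.card)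
    (b : Fin 3 → B) (c : Fin 3 → C) :
    F (S.piecewise (fun i => (b i, 0)) fun i => (0, c i)) = 0 := by
  have inl_mem (x : B) :
      (x, (0 : C)) ∈ Module.End.genEigenspace (s.prodMap r ^ 2) (-1 : K) (3 : ℕ) := by
    refine map_mem_genEigenspace_of_comm (f := s ^ 2) (i := LinearMap.inl K B C) ?_ ?_
    · ext y <;> simp [pow_two]
    · rw [Module.End.mem_genEigenspace_nat, neg_smul, one_smul, sub_neg_eq_add,
        ← complexDefect, hs, LinearMap.ker_zero]
      exact Submodule.mem_top
  have inr_mem (y : C) :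
      ((0 : B), y) ∈ Module.End.genEigenspace (s.prodMap r ^ 2) (1 : K) (2 : ℕ) := by
    refine map_mem_genEigenspace_of_comm (f := r ^ 2) (i := LinearMap.inr K B C) ?_ ?_
    · ext y <;> simp [pow_two]
    · have hr' : (r ^ 2 - (1 : K) • 1) ^ 2 = 0 := by
        have factor : (r ^ 2 - 1) ^ 2 = (r - 1) ^ 2 * (r + 1) ^ 2 := by noncomm_ring
        rw [one_smul, factor, hr, mul_zero]
      rw [Module.End.mem_genEigenspace_nat, hr', LinearMap.ker_zero]
      exact Submodule.mem_top
  refine map_eq_zero_of_mem_genEigenspace F.toMultilinearMap (s.prodMap r ^ 2) (fun v => ?_)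
    (μ := S.piecewise (fun _ => -1) fun _ => 1) ?_ (S.piecewise (fun _ => 3) fun _ => 2) _
    fun i => ?_
  · exact (DFunLike.congr_fun hF fun i => s.prodMap r (v i)).trans (DFunLike.congr_fun hF v)
  · simpa [Finset.prod_piecewise, hS.neg_one_pow] using neg_one_ne_one_of_two_ne_zero K
  · by_cases hi : i ∈ S
    · simpa [hi] using inl_mem (b i)
    · simpa [hi] using inr_mem (c i)

theorem map_inr_inr_inr_eq_zero (hF : F.compLinearMap (s.prodMap r) = F) (hr : (r + 1) ^ 2 = 0)
    (c : Fin 3 → C) : F (fun i => (0, c i)) = 0 := by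
  refine map_eq_zero_of_mem_genEigenspace F.toMultilinearMap (s.prodMap r)
    (DFunLike.congr_fun hF) (μ := fun _ => -1) ?_ (fun _ => 2) _ fun i => ?_
  · simpa [pow_succ] using neg_one_ne_one_of_two_ne_zero K
  · refine map_mem_genEigenspace_of_comm (f := r) (i := LinearMap.inr K B C) ?_ ?_
    · ext y <;> simp
    · rw [Module.End.mem_genEigenspace_nat, neg_smul, one_smul, sub_neg_eq_add, hr,
        LinearMap.ker_zero]
      exact Submodule.mem_top

theorem threeForm_eq_zero_of_map_inr_inl_inl (hF : F.compLinearMap (s.prodMap r) = F)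
    (hs : complexDefect s ^ 3 = 0) (hr : (r + 1) ^ 2 = 0)
    (hmix : ∀ (c : C) (x y : B), F ![(0, c), (x, 0), (y, 0)] = 0) : F = 0 := by
  ext v
  have hv : v = (fun i => ((v i).1, 0)) + fun i => (0, (v i).2) := by ext i <;> simp
  rw [hv, F.map_add_univ]
  refine Finset.sum_eq_zero fun S _ => ?_
  have hS : S.card ≤ 3 := S.card_le_univ
  by_cases hodd : Odd S.card
  · exact map_piecewise_inl_inr_eq_zero_of_odd hF hs hr hodd _ _
  obtain hS0 | hS2 : S.card = 0 ∨ Sᶜ.card = 1 := by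
    rw [Finset.card_compl, Fintype.card_fin]
    grind
  · rw [Finset.card_eq_zero.1 hS0, Finset.piecewise_empty]
    exact map_inr_inr_inr_eq_zero hF hr _
  · obtain ⟨j, hj⟩ := Finset.card_eq_one.1 hS2
    rw [← compl_compl S, hj]
    exact map_piecewise_compl_singleton_eq_zero hmix j _ _

theorem threeForm_eq_zero (hF : F.compLinearMap (s.prodMap r) = F) {u : B}
    (hu : Submodule.span K ({u, s u} ∪ Set.range (complexDefect s)) = ⊤)
    (hs : complexDefect s ^ 3 = 0) {c : C} (hc : Submodule.span K {c, r c + c} = ⊤)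
    (hr : (r + 1) ^ 2 = 0)
    (hup : ∀ a ∈ ({c, r c + c} : Set C), F ![(0, a), (u, 0), (complexDefect s u, 0)] = 0)
    (hutp : ∀ a ∈ ({c, r c + c} : Set C), F ![(0, a), (u, 0), (s (complexDefect s u), 0)] = 0) :
    F = 0 := by
  have hr' : r (r c + c) + (r c + c) = 0 := by
    simpa [pow_two] using LinearMap.congr_fun hr c
  have hd := map_inr_inl_inl_eq_zero hF hu hs (c := r c + c)
    (fun x y => F.map_coord_zero 0 (by simp [-map_add, hr'])) (hup _ (by simp)) (hutp _ (by simp))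
  have hc₀ := map_inr_inl_inl_eq_zero hF hu hs hd (hup c (by simp)) (hutp c (by simp))
  refine threeForm_eq_zero_of_map_inr_inl_inl hF hs hr fun a x y => ?_
  obtain ⟨α, β, rfl⟩ := Submodule.mem_span_pair.1 (hc.ge (Submodule.mem_top (x := a)))
  have split : ((0 : B), α • c + β • (r c + c)) = α • (0, c) + β • (0, r c + c) := by simp
  rw [split, F.map_vecCons_add, F.map_vecCons_smul, F.map_vecCons_smul, hc₀, hd, smul_zero,
    smul_zero, add_zero]

end ThreeForms

section LaurentModules

variable (K M : Type) [Field K] [AddCommGroup M] [Module K[T;T⁻¹] M] [Module K M]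
  [IsScalarTower K K[T;T⁻¹] M]

/-- Multiplication by `t` on a `K[t^{±1}]`-module, as a `K`-linear endomorphism. -/
def shift : Module.End K M :=
  Algebra.lsmul K K M (T 1 : K[T;T⁻¹])

variable {K M}

@[simp]
theorem shift_apply (m : M) : shift K M m = (T 1 : K[T;T⁻¹]) • m :=
  rfl

theorem shift_add_one : shift K M + 1 = Algebra.lsmul K K M (T 1 + 1 : K[T;T⁻¹]) := by
  rw [map_add, map_one, shift]

theorem complexDefect_shift :
    complexDefect (shift K M) = Algebra.lsmul K K M (T 2 + 1 : K[T;T⁻¹]) := by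
  rw [complexDefect, shift, map_add, map_one, ← map_pow, T_pow]
  norm_num

theorem smul_mk (p q f : K[T;T⁻¹]) :
    q • Ideal.Quotient.mk (Ideal.span {p}) f = Ideal.Quotient.mk (Ideal.span {p}) (q * f) :=
  rfl

theorem lsmul_LQuot_self (p : K[T;T⁻¹]) : Algebra.lsmul K K (LQuot K p) p = 0 := by
  refine LinearMap.ext fun m => ?_
  obtain ⟨q, rfl⟩ := Ideal.Quotient.mk_surjective m
  change p • Ideal.Quotient.mk (Ideal.span {p}) q = 0
  rw [smul_mk, Ideal.Quotient.eq_zero_iff_mem]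
  exact Ideal.mul_mem_right q _ (Ideal.mem_span_singleton_self p)

variable {p : K[T;T⁻¹]}

theorem eq_top_of_forall_mk_T_mem {W : Submodule K (LQuot K p)}
    (hW : ∀ n : ℤ, Ideal.Quotient.mk (Ideal.span {p}) (T n) ∈ W) : W = ⊤ := by
  refine eq_top_iff.2 fun m _ => ?_
  obtain ⟨q, rfl⟩ := Ideal.Quotient.mk_surjective m
  induction q using LaurentPolynomial.induction_on' with
  | add f g hf hg =>
    rw [map_add]
    exact W.add_mem (hf trivial) (hg trivial)
  | C_mul_T n a =>
    rw [← smul_eq_C_mul]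
    exact W.smul_mem a (hW n)

theorem span_one_shift_union_range_complexDefect :
    Submodule.span K ({1, shift K (LQuot K p) 1} ∪
      Set.range (complexDefect (shift K (LQuot K p)))) = ⊤ := by
  set W := Submodule.span K ({1, shift K (LQuot K p) 1} ∪
    Set.range (complexDefect (shift K (LQuot K p))))
  let e (n : ℤ) : LQuot K p := Ideal.Quotient.mk (Ideal.span {p}) (T n)
  have add_mem (n : ℤ) : e (n + 2) + e n ∈ W := by
    refine Submodule.subset_span (Or.inr ⟨e n, ?_⟩)
    rw [complexDefect_shift]
    change (T 2 + 1 : K[T;T⁻¹]) • e n = _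
    rw [smul_mk, add_mul, ← T_add, one_mul, map_add, add_comm 2 n]
  have pair_mem (n : ℤ) : e n ∈ W ∧ e (n + 1) ∈ W := by
    induction n using Int.induction_on with
    | zero =>
      have e_one : e 1 = shift K (LQuot K p) 1 := by
        rw [shift_apply, ← map_one (Ideal.Quotient.mk (Ideal.span {p})), smul_mk, mul_one]
      exact ⟨Submodule.subset_span (by simp [e]), Submodule.subset_span (by simp [e_one])⟩
    | succ n ih => exact ⟨ih.2, by simpa [add_assoc] using (W.add_mem_iff_left ih.1).1 (add_mem n)⟩
    | pred n ih =>
      have := add_mem (-n - 1)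
      rw [show -(n : ℤ) - 1 + 2 = -n + 1 by ring] at this
      exact ⟨(W.add_mem_iff_right ih.2).1 this, by simpa using ih.1⟩
  exact eq_top_of_forall_mk_T_mem fun n => (pair_mem n).1

theorem span_one_union_range_shift_add_one :
    Submodule.span K ({1} ∪ Set.range (shift K (LQuot K p) + 1 : Module.End K (LQuot K p))) =
      ⊤ := by
  set W := Submodule.span K ({1} ∪ Set.range (shift K (LQuot K p) + 1 : Module.End K (LQuot K p)))
  let e (n : ℤ) : LQuot K p := Ideal.Quotient.mk (Ideal.span {p}) (T n)
  have add_mem (n : ℤ) : e (n + 1) + e n ∈ W := by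
    refine Submodule.subset_span (Or.inr ⟨e n, ?_⟩)
    rw [shift_add_one]
    change (T 1 + 1 : K[T;T⁻¹]) • e n = _
    rw [smul_mk, add_mul, ← T_add, one_mul, map_add, add_comm 1 n]
  refine eq_top_of_forall_mk_T_mem fun n => ?_
  induction n using Int.induction_on with
  | zero => exact Submodule.subset_span (by simp)
  | succ n ih => exact (W.add_mem_iff_left ih).1 (add_mem n)
  | pred n ih =>
    have := add_mem (-n - 1)
    rw [sub_add_cancel] at this
    exact (W.add_mem_iff_right ih).1 this

theorem span_pair_eq_top_of_span_union_range {C : Type*} [AddCommGroup C] [Module K C]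
    {r : Module.End K C} {c : C} (hr : (r + 1) ^ 2 = 0)
    (hc : Submodule.span K ({c} ∪ Set.range (r + 1 : Module.End K C)) = ⊤) :
    Submodule.span K {c, r c + c} = ⊤ := by
  rw [eq_top_iff, ← hc, Submodule.span_le]
  have range_le : LinearMap.range (r + 1) ≤ Submodule.span K {r c + c} := by
    rw [LinearMap.range_eq_map, ← hc, Submodule.map_span_le]
    rintro _ (rfl | ⟨y, rfl⟩)
    · exact Submodule.mem_span_singleton_self _
    · rw [← Module.End.mul_apply, ← pow_two, hr]
      exact zero_mem _
  refine Set.union_subset ?_ fun y hy => ?_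
  · exact Set.singleton_subset_iff.2 (Submodule.subset_span (by simp))
  · exact Submodule.span_mono (by simp) (range_le hy)

end LaurentModules

section Holonomy

theorem wedge3_eq_ιMulti {K M : Type} [Field K] [AddCommGroup M] [Module K M] (a b c : M) :
    wedge3 K M a b c = exteriorPower.ιMulti K 3 ![a, b, c] :=
  rfl

variable (K M : Type) [Field K] [AddCommGroup M] [Module K[T;T⁻¹] M] [Module K M]
  [IsScalarTower K K[T;T⁻¹] M]

/-- The class of `a ∧ b ∧ c` in `ℋ(M)`, as an alternating map. -/
def holClass : M [⋀^Fin 3]→ₗ[K] Hcal K M :=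
  (wedgeHol K M).mkQ.compAlternatingMap (exteriorPower.ιMulti K 3)

variable {K M} {N : Type*} [AddCommGroup N] [Module K N]

theorem compLinearMap_shift_apply (F : M [⋀^Fin 3]→ₗ[K] N) (a b c : M) :
    F.compLinearMap (shift K M) ![a, b, c] =
      F ![(T 1 : K[T;T⁻¹]) • a, (T 1 : K[T;T⁻¹]) • b, (T 1 : K[T;T⁻¹]) • c] :=
  congrArg F (by ext i; fin_cases i <;> rfl)

variable (K M) in
theorem holClass_compLinearMap_shift :
    (holClass K M).compLinearMap (shift K M) = holClass K M := by
  ext v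
  have hv : v = ![v 0, v 1, v 2] := by ext i; fin_cases i <;> rfl
  rw [hv, compLinearMap_shift_apply]
  exact ((Submodule.Quotient.eq (wedgeHol K M)).2
    (Submodule.subset_span ⟨v 0, v 1, v 2, rfl⟩)).symm

theorem hcal_hom_eq_zero {L : Hcal K M →ₗ[K] N} (hL : L.compAlternatingMap (holClass K M) = 0) :
    L = 0 :=
  Submodule.linearMap_qext _ (exteriorPower.linearMap_ext hL)

/-- The linear functional on `ℋ(M)` induced by a `t`-invariant 3-form. -/
def hcalLift (F : M [⋀^Fin 3]→ₗ[K] N) (hF : F.compLinearMap (shift K M) = F) : Hcal K M →ₗ[K] N :=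
  (wedgeHol K M).liftQ (exteriorPower.alternatingMapLinearEquiv F) <| by
    rw [wedgeHol, Submodule.span_le]
    rintro _ ⟨a, b, c, rfl⟩
    rw [SetLike.mem_coe, LinearMap.mem_ker, map_sub, wedge3_eq_ιMulti, wedge3_eq_ιMulti,
      exteriorPower.alternatingMapLinearEquiv_apply_ιMulti,
      exteriorPower.alternatingMapLinearEquiv_apply_ιMulti, ← compLinearMap_shift_apply, hF,
      sub_self]

@[simp]
theorem hcalLift_holClass (F : M [⋀^Fin 3]→ₗ[K] N) (hF : F.compLinearMap (shift K M) = F)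
    (v : Fin 3 → M) : hcalLift F hF (holClass K M v) = F v := by
  simp [hcalLift, holClass]

end Holonomy

section UpperBound

variable (K : Type) [Field K]

/-- The module `𝔄` with the field `ℚ` replaced by `K`. -/
abbrev AmodOver : Type :=
  LQuot K ((T 2 + 1) ^ 3) × LQuot K ((T 1 + 1) ^ 2)

/-- The classes `a ∧ 1 ∧ m` in `ℋ(𝔄)` for `a ∈ {1, t + 1}` in the second summand and
`m ∈ {t² + 1, t(t² + 1)}` in the first. -/
def holBasisVec : Fin 4 → Hcal K (AmodOver K) :=
  let t := shift K (LQuot K ((T 2 + 1) ^ 3))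
  let d := shift K (LQuot K ((T 1 + 1) ^ 2)) 1 + 1
  ![holClass K (AmodOver K) ![(0, 1), (1, 0), (complexDefect t 1, 0)],
    holClass K (AmodOver K) ![(0, 1), (1, 0), (t (complexDefect t 1), 0)],
    holClass K (AmodOver K) ![(0, d), (1, 0), (complexDefect t 1, 0)],
    holClass K (AmodOver K) ![(0, d), (1, 0), (t (complexDefect t 1), 0)]]

theorem complexDefect_shift_cube : complexDefect (shift K (LQuot K ((T 2 + 1) ^ 3))) ^ 3 = 0 := by
  rw [complexDefect_shift, ← map_pow, lsmul_LQuot_self]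

theorem shift_add_one_sq : (shift K (LQuot K ((T 1 + 1) ^ 2)) + 1) ^ 2 = 0 := by
  rw [shift_add_one, ← map_pow, lsmul_LQuot_self]

theorem span_holBasisVec [NeZero (2 : K)] :
    Submodule.span K (Set.range (holBasisVec K)) = ⊤ := by
  set W := Submodule.span K (Set.range (holBasisVec K))
  have hW (i : Fin 4) : W.mkQ (holBasisVec K i) = 0 :=
    (Submodule.Quotient.mk_eq_zero W).2 (Submodule.subset_span ⟨i, rfl⟩)
  have invariant : (W.mkQ.compAlternatingMap (holClass K (AmodOver K))).compLinearMap
      ((shift K _).prodMap (shift K _)) = W.mkQ.compAlternatingMap (holClass K (AmodOver K)) :=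
    congrArg W.mkQ.compAlternatingMap (holClass_compLinearMap_shift K (AmodOver K))
  have mkQ_eq_zero : W.mkQ = 0 := by
    refine hcal_hom_eq_zero (threeForm_eq_zero invariant
      span_one_shift_union_range_complexDefect (complexDefect_shift_cube K)
      (span_pair_eq_top_of_span_union_range (shift_add_one_sq K)
        span_one_union_range_shift_add_one) (shift_add_one_sq K) ?_ ?_)
    · rintro _ (rfl | rfl)
      exacts [hW 0, hW 2]
    · rintro _ (rfl | rfl)
      exacts [hW 1, hW 3]
  rw [← W.ker_mkQ, mkQ_eq_zero, LinearMap.ker_zero]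

end UpperBound

section Jets

open PowerSeries in
/-- The Taylor expansion of a Laurent polynomial along the curve `t = a(1 + X)`. -/
def jet {K S : Type*} [CommRing K] [CommRing S] [Algebra K S] (a : Sˣ) :
    K[T;T⁻¹] →ₐ[K] S⟦X⟧ :=
  { LaurentPolynomial.eval₂ (algebraMap K S⟦X⟧)
      (isUnit_iff_constantCoeff.2 (by simp) : IsUnit (PowerSeries.C (a : S) * (1 + X))).unit with
    commutes' := fun k => LaurentPolynomial.eval₂_C _ _ k }

theorem jet_T_one {K S : Type*} [CommRing K] [CommRing S] [Algebra K S] {a : Sˣ} :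
    jet a (T 1 : K[T;T⁻¹]) = PowerSeries.C (a : S) * (1 + PowerSeries.X) :=
  (LaurentPolynomial.eval₂_T_n (algebraMap K (PowerSeries S)) _ 1).trans (pow_one _)

theorem jet_T_two {K S : Type*} [CommRing K] [CommRing S] [Algebra K S] {a : Sˣ} :
    jet a (T 2 : K[T;T⁻¹]) = (PowerSeries.C (a : S) * (1 + PowerSeries.X)) ^ 2 := by
  rw [← jet_T_one (K := K), ← map_pow, T_pow]
  norm_num

variable {K : Type} {S : Type*} [Field K] [CommRing S] [Algebra K S] {a : Sˣ} {p : K[T;T⁻¹]}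
  {n : ℕ}

/-- The `k`-th Taylor coefficient as a functional on `K[t^{±1}]/(p)`, where `p` vanishes to
order `n > k` along `t = a(1 + X)`. -/
def jetCoeff (hp : PowerSeries.X ^ n ∣ jet a p) (k : Fin n) : LQuot K p →ₗ[K] S :=
  ((Ideal.span {p}).restrictScalars K).liftQ
      ((PowerSeries.coeff (R := S) k).restrictScalars K ∘ₗ (jet a).toLinearMap) (by
    intro q hq
    obtain ⟨f, rfl⟩ := Ideal.mem_span_singleton.1 hq
    rw [LinearMap.mem_ker, LinearMap.comp_apply, AlgHom.toLinearMap_apply, map_mul]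
    exact PowerSeries.X_pow_dvd_iff.1 (hp.mul_right _) k k.2) ∘ₗ
    (Submodule.Quotient.restrictScalarsEquiv K (Ideal.span {p})).symm.toLinearMap

theorem jetCoeff_mk (hp : PowerSeries.X ^ n ∣ jet a p) (k : Fin n) (q : K[T;T⁻¹]) :
    jetCoeff hp k (Ideal.Quotient.mk _ q) = PowerSeries.coeff k (jet a q) :=
  rfl

theorem jetCoeff_one (hp : PowerSeries.X ^ n ∣ jet a p) (k : Fin n) :
    jetCoeff hp k 1 = if (k : ℕ) = 0 then 1 else 0 := by
  rw [← map_one (Ideal.Quotient.mk _), jetCoeff_mk, map_one, PowerSeries.coeff_one]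

theorem jetCoeff_zero_shift [NeZero n] (hp : PowerSeries.X ^ n ∣ jet a p) (m : LQuot K p) :
    jetCoeff hp 0 (shift K _ m) = a * jetCoeff hp 0 m := by
  obtain ⟨q, rfl⟩ := Ideal.Quotient.mk_surjective m
  rw [shift_apply, smul_mk, jetCoeff_mk, jetCoeff_mk, map_mul, jet_T_one, mul_assoc,
    PowerSeries.coeff_C_mul]
  simp [add_mul]

theorem jetCoeff_succ_shift (hp : PowerSeries.X ^ (n + 1) ∣ jet a p) (k : Fin n)
    (m : LQuot K p) :
    jetCoeff hp k.succ (shift K _ m) =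
      a * (jetCoeff hp k.succ m + jetCoeff hp k.castSucc m) := by
  obtain ⟨q, rfl⟩ := Ideal.Quotient.mk_surjective m
  rw [shift_apply, smul_mk, jetCoeff_mk, jetCoeff_mk, jetCoeff_mk, map_mul, jet_T_one, mul_assoc,
    PowerSeries.coeff_C_mul, add_mul, one_mul, map_add, Fin.val_succ,
    PowerSeries.coeff_succ_X_mul, Fin.val_castSucc]

end Jets

section DeterminantForms

variable {K S M ι : Type*} [CommRing K] [CommRing S] [Algebra K S] [AddCommGroup M] [Module K M]

/-- The wedge product of a family of `S`-valued functionals, as an alternating form over `K`. -/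
def detForm [Fintype ι] [DecidableEq ι] (x : ι → M →ₗ[K] S) : M [⋀^ι]→ₗ[K] S :=
  { Matrix.detRowAlternating.toMultilinearMap.restrictScalars K with
    map_eq_zero_of_eq' := Matrix.detRowAlternating.map_eq_zero_of_eq' :
    (ι → S) [⋀^ι]→ₗ[K] S }.compLinearMap (LinearMap.pi x)

theorem detForm_apply [Fintype ι] [DecidableEq ι] (x : ι → M →ₗ[K] S) (v : ι → M) :
    detForm x v = (Matrix.of fun i j => x j (v i)).det :=
  rfl

variable {t : Module.End K M} {x₀ x₁ x₂ z₀ z₁ : M →ₗ[K] S} {a b : S}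

theorem detForm_compLinearMap_of_eigen (hab : a ^ 2 * b = 1) (hx₀ : ∀ m, x₀ (t m) = a * x₀ m)
    (hx₁ : ∀ m, x₁ (t m) = a * (x₁ m + x₀ m)) (hz₀ : ∀ m, z₀ (t m) = b * z₀ m) :
    (detForm ![x₀, x₁, z₀]).compLinearMap t = detForm ![x₀, x₁, z₀] := by
  ext v
  have scale : detForm ![x₀, x₁, z₀] (t ∘ v) = a ^ 2 * b * detForm ![x₀, x₁, z₀] v := by
    simp only [detForm_apply, Matrix.det_fin_three, Matrix.of_apply, Matrix.cons_val,
      Function.comp_apply, hx₀, hx₁, hz₀]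
    ring
  rw [hab, one_mul] at scale
  exact scale

theorem detForm_sub_detForm_compLinearMap (hab : a ^ 2 * b = 1)
    (hx₀ : ∀ m, x₀ (t m) = a * x₀ m) (hx₁ : ∀ m, x₁ (t m) = a * (x₁ m + x₀ m))
    (hx₂ : ∀ m, x₂ (t m) = a * (x₂ m + x₁ m)) (hz₀ : ∀ m, z₀ (t m) = b * z₀ m)
    (hz₁ : ∀ m, z₁ (t m) = b * (z₁ m + z₀ m)) :
    (detForm ![x₀, x₂, z₀] - detForm ![x₀, x₁, z₁]).compLinearMap t =
      detForm ![x₀, x₂, z₀] - detForm ![x₀, x₁, z₁] := by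
  ext v
  have scale : (detForm ![x₀, x₂, z₀] - detForm ![x₀, x₁, z₁]) (t ∘ v) =
      a ^ 2 * b * (detForm ![x₀, x₂, z₀] - detForm ![x₀, x₁, z₁]) v := by
    simp only [AlternatingMap.sub_apply, detForm_apply, Matrix.det_fin_three, Matrix.of_apply,
      Matrix.cons_val, Function.comp_apply, hx₀, hx₁, hx₂, hz₀, hz₁]
    ring
  rw [hab, one_mul] at scale
  exact scale

end DeterminantForms

section LowerBound

open QuadraticAlgebra

variable (K : Type) [Field K]

/-- The algebra `K[i]/(i² + 1)`, which contains the roots `± i` of `t² + 1`. -/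
abbrev GaussAlgebra : Type :=
  QuadraticAlgebra K (-1) 0

/-- The square root `i` of `-1` as a unit of `K[i]/(i² + 1)`. -/
def gaussUnit : (GaussAlgebra K)ˣ where
  val := ω
  inv := -ω
  val_inv := by ext <;> simp
  inv_val := by ext <;> simp

theorem gaussUnit_sq : (gaussUnit K : GaussAlgebra K) ^ 2 = -1 := by
  rw [pow_two]
  ext <;> simp [gaussUnit]

theorem gaussUnit_sq_mul_neg_one : (gaussUnit K : GaussAlgebra K) ^ 2 * -1 = 1 := by
  rw [gaussUnit_sq, neg_one_mul, neg_neg]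

theorem X_pow_dvd_jet_gaussUnit :
    PowerSeries.X ^ 3 ∣ jet (gaussUnit K) ((T 2 + 1) ^ 3 : K[T;T⁻¹]) := by
  rw [map_pow]
  refine pow_dvd_pow_of_dvd (PowerSeries.X_dvd_iff.2 ?_) 3
  simp [jet_T_two, gaussUnit_sq]

theorem X_pow_dvd_jet_neg_one :
    PowerSeries.X ^ 2 ∣ jet (-1 : (GaussAlgebra K)ˣ) ((T 1 + 1) ^ 2 : K[T;T⁻¹]) := by
  rw [map_pow]
  refine pow_dvd_pow_of_dvd (PowerSeries.X_dvd_iff.2 ?_) 2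
  simp [jet_T_one]

/-- The Taylor coefficients at `t = i` on the first summand of `𝔄`. -/
def jetAtI (k : Fin 3) : LQuot K ((T 2 + 1) ^ 3) →ₗ[K] GaussAlgebra K :=
  jetCoeff (X_pow_dvd_jet_gaussUnit K) k

/-- The Taylor coefficients at `t = -1` on the second summand of `𝔄`. -/
def jetAtNegOne (k : Fin 2) : LQuot K ((T 1 + 1) ^ 2) →ₗ[K] GaussAlgebra K :=
  jetCoeff (X_pow_dvd_jet_neg_one K) k

variable {K}

theorem jetAtI_zero_shift (m : LQuot K ((T 2 + 1) ^ 3)) :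
    jetAtI K 0 (shift K _ m) = gaussUnit K * jetAtI K 0 m :=
  jetCoeff_zero_shift (X_pow_dvd_jet_gaussUnit K) m

theorem jetAtI_one_shift (m : LQuot K ((T 2 + 1) ^ 3)) :
    jetAtI K 1 (shift K _ m) = gaussUnit K * (jetAtI K 1 m + jetAtI K 0 m) :=
  jetCoeff_succ_shift (X_pow_dvd_jet_gaussUnit K) 0 m

theorem jetAtI_two_shift (m : LQuot K ((T 2 + 1) ^ 3)) :
    jetAtI K 2 (shift K _ m) = gaussUnit K * (jetAtI K 2 m + jetAtI K 1 m) :=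
  jetCoeff_succ_shift (X_pow_dvd_jet_gaussUnit K) 1 m

theorem jetAtI_one (k : Fin 3) : jetAtI K k 1 = if (k : ℕ) = 0 then 1 else 0 :=
  jetCoeff_one (X_pow_dvd_jet_gaussUnit K) k

theorem jetAtNegOne_zero_shift (m : LQuot K ((T 1 + 1) ^ 2)) :
    jetAtNegOne K 0 (shift K _ m) = -1 * jetAtNegOne K 0 m :=
  jetCoeff_zero_shift (X_pow_dvd_jet_neg_one K) m

theorem jetAtNegOne_one_shift (m : LQuot K ((T 1 + 1) ^ 2)) :
    jetAtNegOne K 1 (shift K _ m) = -1 * (jetAtNegOne K 1 m + jetAtNegOne K 0 m) :=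
  jetCoeff_succ_shift (X_pow_dvd_jet_neg_one K) 0 m

theorem jetAtNegOne_one (k : Fin 2) : jetAtNegOne K k 1 = if (k : ℕ) = 0 then 1 else 0 :=
  jetCoeff_one (X_pow_dvd_jet_neg_one K) k

theorem jetAtI_complexDefect_one (k : Fin 3) :
    jetAtI K k (complexDefect (shift K _) 1) = ![0, -2, -1] k := by
  have hi := gaussUnit_sq K
  rw [complexDefect_apply, map_add, jetAtI_one]
  fin_cases k
  · simp [jetAtI_zero_shift, jetAtI_one, -shift_apply, ← pow_two, hi]
  · norm_num [jetAtI_one_shift, jetAtI_zero_shift, jetAtI_one, -shift_apply, mul_add, ← pow_two,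
      hi]
  · simp [jetAtI_two_shift, jetAtI_one_shift, jetAtI_one, -shift_apply, ← pow_two, hi]

theorem jetAtNegOne_shift_one_add_one (k : Fin 2) :
    jetAtNegOne K k (shift K _ 1 + 1) = ![0, -1] k := by
  rw [map_add, jetAtNegOne_one]
  fin_cases k
  · simp [jetAtNegOne_zero_shift, jetAtNegOne_one, -shift_apply]
  · simp [jetAtNegOne_one_shift, jetAtNegOne_one, -shift_apply]

variable (K)

/-- The Taylor coefficients at `t = i` as functionals on `𝔄`. -/
def jetFst (k : Fin 3) : AmodOver K →ₗ[K] GaussAlgebra K :=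
  jetAtI K k ∘ₗ .fst K _ _

/-- The Taylor coefficients at `t = -1` as functionals on `𝔄`. -/
def jetSnd (k : Fin 2) : AmodOver K →ₗ[K] GaussAlgebra K :=
  jetAtNegOne K k ∘ₗ .snd K _ _

/-- The functional `x₀ ∧ x₁ ∧ z₀` on `ℋ(𝔄)`, where `xₖ` and `zₖ` are the Taylor coefficients
at `i` and `-1`. -/
def leadingFunctional : Hcal K (AmodOver K) →ₗ[K] GaussAlgebra K :=
  hcalLift (detForm ![jetFst K 0, jetFst K 1, jetSnd K 0])
    (detForm_compLinearMap_of_eigen (gaussUnit_sq_mul_neg_one K)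
      (fun m => jetAtI_zero_shift m.1) (fun m => jetAtI_one_shift m.1)
      (fun m => jetAtNegOne_zero_shift m.2))

/-- The functional `x₀ ∧ x₂ ∧ z₀ - x₀ ∧ x₁ ∧ z₁` on `ℋ(𝔄)`, where `xₖ` and `zₖ` are the Taylor
coefficients at `i` and `-1`. -/
def subleadingFunctional : Hcal K (AmodOver K) →ₗ[K] GaussAlgebra K :=
  hcalLift (detForm ![jetFst K 0, jetFst K 2, jetSnd K 0] -
      detForm ![jetFst K 0, jetFst K 1, jetSnd K 1])
    (detForm_sub_detForm_compLinearMap (gaussUnit_sq_mul_neg_one K)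
      (fun m => jetAtI_zero_shift m.1) (fun m => jetAtI_one_shift m.1)
      (fun m => jetAtI_two_shift m.1) (fun m => jetAtNegOne_zero_shift m.2)
      (fun m => jetAtNegOne_one_shift m.2))

theorem leadingFunctional_holClass (c : LQuot K ((T 1 + 1) ^ 2)) (m : LQuot K ((T 2 + 1) ^ 3)) :
    leadingFunctional K (holClass K (AmodOver K) ![(0, c), (1, 0), (m, 0)]) =
      jetAtNegOne K 0 c * jetAtI K 1 m := by
  simp [leadingFunctional, detForm_apply, Matrix.det_fin_three, jetFst, jetSnd, jetAtI_one]

theorem subleadingFunctional_holClass (c : LQuot K ((T 1 + 1) ^ 2))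
    (m : LQuot K ((T 2 + 1) ^ 3)) :
    subleadingFunctional K (holClass K (AmodOver K) ![(0, c), (1, 0), (m, 0)]) =
      jetAtNegOne K 0 c * jetAtI K 2 m - jetAtNegOne K 1 c * jetAtI K 1 m := by
  simp [subleadingFunctional, detForm_apply, Matrix.det_fin_three, jetFst, jetSnd, jetAtI_one]

theorem leadingFunctional_holBasisVec (i : Fin 4) :
    leadingFunctional K (holBasisVec K i) = ![-2, -2 * ω, 0, 0] i := by
  fin_cases i <;>
    simp [holBasisVec, leadingFunctional_holClass, jetAtNegOne_one, jetAtI_complexDefect_one,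
      jetAtNegOne_shift_one_add_one, jetAtI_one_shift, -shift_apply, gaussUnit, mul_comm]

theorem subleadingFunctional_holBasisVec (i : Fin 4) :
    subleadingFunctional K (holBasisVec K i) =
      (![-1, -3 * ω, -2, -2 * ω] : Fin 4 → GaussAlgebra K) i := by
  fin_cases i <;>
    simp [holBasisVec, subleadingFunctional_holClass, jetAtNegOne_one, jetAtI_complexDefect_one,
      jetAtNegOne_shift_one_add_one, jetAtI_one_shift, jetAtI_two_shift, -shift_apply,
      gaussUnit] <;>
    ring

variable {K} in
theorem eq_zero_of_smul_two_add_smul_two_omega [NeZero (2 : K)] {α β : K}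
    (h : α • (-2 : GaussAlgebra K) + β • (-2 * ω) = 0) : α = 0 ∧ β = 0 := by
  have hre : α * -2 = 0 := by simpa using congrArg QuadraticAlgebra.re h
  have him : β * -2 = 0 := by simpa using congrArg QuadraticAlgebra.im h
  simpa [two_ne_zero] using And.intro hre him

theorem linearIndependent_holBasisVec [NeZero (2 : K)] :
    LinearIndependent K (holBasisVec K) := by
  refine Fintype.linearIndependent_iff.2 fun α hα => ?_
  have leading := congrArg (leadingFunctional K) hα
  have subleading := congrArg (subleadingFunctional K) hα
  simp only [Fin.sum_univ_four, map_add, map_smul, map_zero,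
    leadingFunctional_holBasisVec, subleadingFunctional_holBasisVec] at leading subleading
  have h01 : α 0 = 0 ∧ α 1 = 0 :=
    eq_zero_of_smul_two_add_smul_two_omega (by simpa using leading)
  have h23 : α 2 = 0 ∧ α 3 = 0 :=
    eq_zero_of_smul_two_add_smul_two_omega (by simpa [h01] using subleading)
  intro i
  fin_cases i
  exacts [h01.1, h01.2, h23.1, h23.2]

end LowerBound

theorem stmt17_general (K : Type) [Field K] [NeZero (2 : K)] :
    Module.finrank K (Hcal K (LQuot K ((T 2 + 1) ^ 3) × LQuot K ((T 1 + 1) ^ 2))) = 4 := by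
  have := Module.finrank_eq_card_basis
    (Module.Basis.mk (linearIndependent_holBasisVec K) (span_holBasisVec K).ge)
  rwa [Fintype.card_fin] at this

theorem stmt17 : Module.finrank ℚ (Hcal ℚ Amod) = 4 :=
  stmt17_general ℚ
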